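/- (Lemma 2, comparison lemma) Let s, ε, γ : [0,∞) → ℝ be functions with s(t) ≥ 0, ε(t) ≥ 0 and γ(t) > 0 for all t, such that s is differentiable, ∫_0^t γ(τ)dτ → ∞ as t → ∞, ε(t) → 0 as t → ∞, and ṡ(t) ≤ −γ(t)s(t) + γ(t)ε(t) for all t ≥ 0. Then s(t) → 0 as t → ∞. -/

import Mathlib

open Filter MeasureTheory

/-- Lemma 2 (comparison lemma): if `s t ≥ 0`, `ε t ≥ 0`, `γ t > 0` for all
`t ≥ 0`, `s` is differentiable with derivative `s'`, `∫_0^t γ → ∞`, `ε t → 0`,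
and `s' t ≤ -γ t * s t + γ t * ε t` for all `t ≥ 0`, then `s t → 0`. -/
theorem lemma2_comparison
    (s ε γ s' : ℝ → ℝ)
    (hs : ∀ t ≥ (0:ℝ), 0 ≤ s t)
    (hε : ∀ t ≥ (0:ℝ), 0 ≤ ε t)
    (hγ : ∀ t ≥ (0:ℝ), 0 < γ t)
    (hderiv : ∀ t ≥ (0:ℝ), HasDerivAt s (s' t) t)
    (hγdiv : Tendsto (fun t => ∫ τ in (0:ℝ)..t, γ τ) atTop atTop)
    (hεlim : Tendsto ε atTop (nhds 0))
    (hineq : ∀ t ≥ (0:ℝ), s' t ≤ -γ t * s t + γ t * ε t) :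
    Tendsto s atTop (nhds 0) := by
  have hint : ∀ a b : ℝ, 0 ≤ a → a ≤ b → IntervalIntegrable γ volume a b := by
    intro a b ha hab
    obtain ⟨u, hu1, hub⟩ := ((hγdiv.eventually_ge_atTop 1).and (eventually_ge_atTop b)).exists
    have hI : IntervalIntegrable γ volume 0 u := by
      by_contra h
      rw [intervalIntegral.integral_undef h] at hu1
      linarith
    apply hI.mono_set
    rw [Set.uIcc_of_le hab, Set.uIcc_of_le (by linarith)]
    exact Set.Icc_subset_Icc ha hub
  have key : ∀ δ > 0, ∀ᶠ t in atTop, s t ≤ 2 * δ := by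
    intro δ hδ
    obtain ⟨T0, hT0⟩ := eventually_atTop.1 (hεlim.eventually_le_const hδ)
    obtain ⟨T, hT, hTT⟩ : ∃ T : ℝ, 0 ≤ T ∧ T0 ≤ T := ⟨max 0 T0, le_max_left _ _, le_max_right _ _⟩
    have hT1 : ∀ t ≥ T, ε t ≤ δ := fun t ht => hT0 t (hTT.trans ht)
    have hb : ∀ t ≥ T, 2 * δ ≤ s t → s' t ≤ -δ * γ t := by
      intro t ht h
      have h1 := hineq t (hT.trans ht)
      have h2 := hγ t (hT.trans ht)
      have h3 := hT1 t ht
      nlinarith [mul_nonneg h2.le (show 0 ≤ s t - ε t - δ by linarith)]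
    obtain ⟨t1, ht1, hst1⟩ : ∃ t1 ≥ T, s t1 ≤ 2 * δ := by
      by_contra! hcon
      obtain ⟨u, hu, huT⟩ := ((hγdiv.eventually_ge_atTop
        ((∫ τ in (0:ℝ)..T, γ τ) + (s T + 1) / δ)).and (eventually_ge_atTop T)).exists
      have hle : s u - s T ≤ ∫ y in T..u, -δ * γ y := by
        apply intervalIntegral.sub_le_integral_of_hasDeriv_right_of_le huT (g' := s')
        · exact fun x hx => (hderiv x (hT.trans hx.1)).continuousAt.continuousWithinAt
        · exact fun x hx => (hderiv x (hT.trans hx.1.le)).hasDerivWithinAt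
        · exact (((intervalIntegrable_iff_integrableOn_Icc_of_le huT).1 (hint T u hT huT)).const_mul _)
        · exact fun x hx => hb x hx.1.le (hcon x hx.1.le).le
      rw [intervalIntegral.integral_const_mul] at hle
      have hadd := intervalIntegral.integral_add_adjacent_intervals
        (hint 0 T le_rfl hT) (hint T u hT huT)
      have h4 : (s T + 1) / δ ≤ ∫ y in T..u, γ y := by linarith
      rw [div_le_iff₀ hδ] at h4
      have := hs u (hT.trans huT)
      linarith
    filter_upwards [eventually_ge_atTop t1] with t ht
    have h0 : 0 ≤ t1 := hT.trans ht1
    refine image_le_of_deriv_right_lt_deriv_boundary (f := s) (f' := s') (a := t1) (b := t)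
      (B := fun _ => 2 * δ) (B' := fun _ => 0) ?_ ?_ hst1 ?_ ?_ ⟨ht, le_rfl⟩
    · exact fun x hx => (hderiv x (h0.trans hx.1)).continuousAt.continuousWithinAt
    · exact fun x hx => (hderiv x (h0.trans hx.1)).hasDerivWithinAt
    · exact fun x => hasDerivAt_const _ _
    · intro x hx h
      have h1 := hb x (ht1.trans hx.1) (le_of_eq h.symm)
      have h2 := mul_pos hδ (hγ x (h0.trans hx.1))
      show s' x < 0
      linarith
  rw [Metric.tendsto_nhds]
  intro r hr
  filter_upwards [key (r / 4) (by linarith), eventually_ge_atTop 0] with t h1 h2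
  rw [Real.dist_eq, sub_zero, abs_of_nonneg (hs t h2)]
  linarith
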